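/- Let S be a Cu-semigroup satisfying (O5). Assume that functionals on S are algebraically ordered: whenever ν_1, ν_2 are functionals on S with ν_1(s) ≤ ν_2(s) for all s ∈ S, there exists a functional ν with ν_1 + ν = ν_2. Let λ, μ be densely finite functionals on S with λ extreme and μ nonzero, assume μ is not a positive scalar multiple of λ (μ ≠ c·λ for every c ∈ (0,∞)), and assume S satisfies Edwards' condition for λ and for every positive scalar multiple of λ: min{λ'(x), λ'(y)} = sup{ λ'(z) : z ∈ S, z ≤ x and z ≤ y } for all x, y ∈ S and every λ' = c·λ with c ∈ (0,∞). Then for every ε > 0 there exists w ∈ S such that λ(w) < ε and μ(w) > 1/ε. -/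

import Mathlib

/-- The way-below (compact containment) relation on a partially ordered set:
`WayBelow x y` holds if whenever `(y n)` is an increasing sequence admitting a
supremum `s` with `y ≤ s`, then `x ≤ y n` for some `n`. -/
def WayBelow {S : Type*} [PartialOrder S] (x y : S) : Prop :=
  ∀ f : ℕ → S, Monotone f → ∀ s : S, IsLUB (Set.range f) s → y ≤ s → ∃ n, x ≤ f n

/-- An abstract Cuntz semigroup (Cu-semigroup): a positively ordered commutative
monoid satisfying the axioms (O1)-(O4). -/
class CuSemigroup (S : Type*) [AddCommMonoid S] [PartialOrder S] : Prop where
  /-- The order is positive. -/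
  zero_le : ∀ x : S, 0 ≤ x
  /-- Addition is order-preserving. -/
  add_le_add : ∀ {x y z w : S}, x ≤ y → z ≤ w → x + z ≤ y + w
  /-- (O1): every increasing sequence has a supremum. -/
  O1 : ∀ f : ℕ → S, Monotone f → ∃ s : S, IsLUB (Set.range f) s
  /-- (O2): every element is the supremum of a `≪`-increasing sequence. -/
  O2 : ∀ x : S, ∃ f : ℕ → S, (∀ n, WayBelow (f n) (f (n + 1))) ∧ IsLUB (Set.range f) x
  /-- (O3): the way-below relation is additive. -/
  O3 : ∀ {x' x y' y : S}, WayBelow x' x → WayBelow y' y → WayBelow (x' + y') (x + y)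
  /-- (O4): addition is compatible with suprema of increasing sequences. -/
  O4 : ∀ (f g : ℕ → S), Monotone f → Monotone g → ∀ a b : S,
        IsLUB (Set.range f) a → IsLUB (Set.range g) b →
        IsLUB (Set.range fun n => f n + g n) (a + b)

/-- Axiom (O5) (almost algebraic order). -/
def O5 (S : Type*) [AddCommMonoid S] [PartialOrder S] : Prop :=
  ∀ x' x z : S, WayBelow x' x → x ≤ z → ∃ w : S, x' + w ≤ z ∧ z ≤ x + w

/-- Axiom (O6+). -/
def O6plus (S : Type*) [AddCommMonoid S] [PartialOrder S] : Prop :=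
  ∀ a b c x' x y' y : S, a ≤ b + c →
    WayBelow x' x → x ≤ a → x ≤ b → WayBelow y' y → y ≤ a → y ≤ c →
    ∃ e f : S, a ≤ e + f ∧ WayBelow x' e ∧ e ≤ a ∧ e ≤ b ∧
      WayBelow y' f ∧ f ≤ a ∧ f ≤ c

/-- Weak cancellation: `x + z ≪ y + z` implies `x ≪ y`. -/
def WeakCancel (S : Type*) [AddCommMonoid S] [PartialOrder S] : Prop :=
  ∀ x y z : S, WayBelow (x + z) (y + z) → WayBelow x y

/-- A Cu-semigroup is countably based if there is a countable subset `B` such that every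
element is the supremum of a `≪`-increasing sequence with elements in `B`. -/
def CountablyBased (S : Type*) [AddCommMonoid S] [PartialOrder S] : Prop :=
  ∃ B : Set S, B.Countable ∧ ∀ x : S, ∃ f : ℕ → S, (∀ n, f n ∈ B) ∧
    (∀ n, WayBelow (f n) (f (n + 1))) ∧ IsLUB (Set.range f) x

/-- Addition distributes over the infimum operation. -/
def InfDistrib (S : Type*) [AddCommMonoid S] [SemilatticeInf S] : Prop :=
  ∀ x y z : S, (x + z) ⊓ (y + z) = (x ⊓ y) + z

/-- A functional on an ordered monoid: a `[0,∞]`-valued map preserving `0`, addition,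
order, and suprema of increasing sequences. -/
def IsFunctional {S : Type*} [AddCommMonoid S] [PartialOrder S] (l : S → ENNReal) : Prop :=
  l 0 = 0 ∧ (∀ x y : S, l (x + y) = l x + l y) ∧ (∀ x y : S, x ≤ y → l x ≤ l y) ∧
    ∀ (f : ℕ → S) (s : S), Monotone f → IsLUB (Set.range f) s → l s = ⨆ n, l (f n)

/-- An element is soft if each of its way-below approximants `x'` satisfies
`(k+1)·x' ≤ k·x` for some `k`. -/
def Soft {S : Type*} [AddCommMonoid S] [PartialOrder S] (x : S) : Prop :=
  ∀ x' : S, WayBelow x' x → ∃ k : ℕ, (k + 1) • x' ≤ k • x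

/-- An element `x` is full if `∞·x = sup_n n·x` exists and dominates every element. -/
def IsFull {S : Type*} [AddCommMonoid S] [PartialOrder S] (x : S) : Prop :=
  ∃ s : S, IsLUB (Set.range fun n : ℕ => n • x) s ∧ ∀ t : S, t ≤ s

/-- A functional is densely finite if it is finite on every element that is way below
some element. -/
def DenselyFinite {S : Type*} [AddCommMonoid S] [PartialOrder S] (lam : S → ENNReal) :
    Prop :=
  ∀ x : S, (∃ xt : S, WayBelow x xt) → lam x ≠ ⊤

/-- A (densely finite) functional `λ` is extreme if every functional dominated by a
finite positive multiple of `λ` is zero or a finite positive scalar multiple of `λ`. -/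
def ExtremeFunctional {S : Type*} [AddCommMonoid S] [PartialOrder S]
    (lam : S → ENNReal) : Prop :=
  ∀ mu : S → ENNReal, IsFunctional mu → ∀ C : ENNReal, 0 < C → C ≠ ⊤ →
    (∀ s : S, mu s ≤ C * lam s) →
    (∀ s : S, mu s = 0) ∨ ∃ c : ENNReal, 0 < c ∧ c ≠ ⊤ ∧ ∀ s : S, mu s = c * lam s

/-!
Let `r` be the largest scalar with `r • λ ≤ μ`. Under (O5) the difference `μ - r • λ` is monotone.
As `μ ≠ r • λ`, it is positive at some `y`, and by maximality of `r` there are elements `x` where it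
is an arbitrarily small multiple of `λ`. Choose multiples with `λ (k • x)` just above `λ (m • y)`.
Edwards' condition provides `z` below both `k • x` and `m • y` with `λ z` almost equal to
`λ (m • y)`, and (O5) provides an almost complement `w` of `z` in `m • y`. Then `λ w` is small,
whereas `μ - r • λ` is small on `z ≤ k • x`, so that almost all of its value at `m • y`, which
grows linearly in `m`, is carried by `w`.
-/

open scoped ENNReal

/-- Edwards' condition for a single functional `l`: the infimum of `l x` and `l y` is approximated
by the values of `l` on common lower bounds of `x` and `y`. -/
def EdwardsCondition {S : Type*} [PartialOrder S] (l : S → ℝ≥0∞) : Prop :=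
  ∀ x y : S, min (l x) (l y) = ⨆ z ∈ {w : S | w ≤ x ∧ w ≤ y}, l z

section Scalars

theorem isGreatest_sSup_mul_le {α : Type*} (f g : α → ℝ≥0∞) :
    IsGreatest {t | ∀ a, t * f a ≤ g a} (sSup {t | ∀ a, t * f a ≤ g a}) := by
  refine ⟨fun a => ?_, fun _ ht => le_sSup ht⟩
  rw [ENNReal.sSup_mul]
  exact iSup₂_le fun _ ht => ht a

theorem exists_nat_mul_add_lt_mul {a b C : ℝ≥0∞} (hab : a < b) (hC : C ≠ ∞) :
    ∃ m : ℕ, m * a + C < m * b := by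
  obtain ⟨m, hm⟩ := ENNReal.exists_nat_mul_gt (tsub_pos_of_lt hab).ne' hC
  refine ⟨m, ?_⟩
  calc m * a + C < m * a + m * (b - a) :=
        ENNReal.add_lt_add_left (ENNReal.mul_ne_top (ENNReal.natCast_ne_top m) hab.ne_top) hm
    _ = m * b := by rw [← mul_add, add_tsub_cancel_of_le hab.le]

theorem exists_nat_le_mul_le_add {a p : ℝ≥0∞} (ha : a ≠ ∞) (hp₀ : p ≠ 0) (hp : p ≠ ∞) :
    ∃ k : ℕ, a ≤ k * p ∧ k * p ≤ a + p := by
  lift a to NNReal using ha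
  lift p to NNReal using hp
  have hp_pos : 0 < p := pos_iff_ne_zero.2 (by exact_mod_cast hp₀)
  refine ⟨⌈a / p⌉₊, ?_, ?_⟩ <;> norm_cast
  · exact (div_le_iff₀ hp_pos).1 (Nat.le_ceil _)
  · calc ⌈a / p⌉₊ * p ≤ (a / p + 1) * p := by
          gcongr
          exact (Nat.ceil_lt_add_one zero_le).le
      _ = a + p := by field_simp

end Scalars

section WayBelow

variable {S : Type*} [PartialOrder S] {x y z : S}

theorem WayBelow.le (h : WayBelow x y) : x ≤ y :=
  (h (fun _ => y) monotone_const y (by simp) le_rfl).elim fun _ hxy => hxy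

theorem WayBelow.trans_le (hxy : WayBelow x y) (hyz : y ≤ z) : WayBelow x z :=
  fun f hf s hs hzs => hxy f hf s hs (hyz.trans hzs)

end WayBelow

namespace IsFunctional

variable {S : Type*} [AddCommMonoid S] [PartialOrder S] {l lam mu nu : S → ℝ≥0∞}

theorem map_zero (hl : IsFunctional l) : l 0 = 0 := hl.1

theorem map_add (hl : IsFunctional l) (x y : S) : l (x + y) = l x + l y := hl.2.1 x y

theorem monotone (hl : IsFunctional l) : Monotone l := fun x y => hl.2.2.1 x y

theorem map_eq_iSup (hl : IsFunctional l) {f : ℕ → S} {s : S} (hf : Monotone f)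
    (hs : IsLUB (Set.range f) s) : l s = ⨆ n, l (f n) := hl.2.2.2 f s hf hs

theorem map_nsmul (hl : IsFunctional l) (n : ℕ) (x : S) : l (n • x) = n * l x := by
  induction n with
  | zero => simp [hl.map_zero]
  | succ n ih => rw [succ_nsmul, hl.map_add, ih, Nat.cast_succ, add_one_mul]

theorem const_mul (hl : IsFunctional l) (t : ℝ≥0∞) : IsFunctional fun s => t * l s := by
  refine ⟨by simp [hl.map_zero], fun x y => by simp [hl.map_add, mul_add],
    fun x y hxy => mul_le_mul' le_rfl (hl.monotone hxy), fun f s hf hs => ?_⟩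
  simp only [hl.map_eq_iSup hf hs, ENNReal.mul_iSup]

variable [CuSemigroup S]

theorem exists_wayBelow_lt (hl : IsFunctional l) {x : S} {r : ℝ≥0∞} (hr : r < l x) :
    ∃ x', WayBelow x' x ∧ r < l x' := by
  obtain ⟨f, hf, hfx⟩ := CuSemigroup.O2 x
  have hf_mono : Monotone f := monotone_nat_of_le_succ fun n => (hf n).le
  rw [hl.map_eq_iSup hf_mono hfx] at hr
  obtain ⟨n, hn⟩ := lt_iSup_iff.1 hr
  exact ⟨f n, (hf n).trans_le (hfx.1 ⟨n + 1, rfl⟩), hn⟩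

theorem le_of_forall_wayBelow (hl : IsFunctional l) {x : S} {r : ℝ≥0∞}
    (h : ∀ x', WayBelow x' x → l x' ≤ r) : l x ≤ r := by
  by_contra! hr
  obtain ⟨x', hx', hrx'⟩ := hl.exists_wayBelow_lt hr
  exact (h x' hx').not_gt hrx'

-- Monotonicity of `mu - nu`, stated without the subtraction because the values may be infinite.
theorem map_add_map_le_of_le (h5 : O5 S) (hmu : IsFunctional mu) (hnu : IsFunctional nu)
    (hle : ∀ s, nu s ≤ mu s) {x z : S} (hxz : x ≤ z) : mu x + nu z ≤ mu z + nu x := by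
  have approx : ∀ x', WayBelow x' x → mu x' + nu z ≤ mu z + nu x := by
    intro x' hx'
    obtain ⟨w, hw_le, hle_w⟩ := h5 x' x z hx' hxz
    calc mu x' + nu z ≤ mu x' + (nu x + nu w) := by
          rw [← hnu.map_add]; gcongr; exact hnu.monotone hle_w
      _ ≤ mu x' + (nu x + mu w) := by gcongr; exact hle w
      _ = mu (x' + w) + nu x := by rw [hmu.map_add]; ring
      _ ≤ mu z + nu x := by gcongr; exact hmu.monotone hw_le
  by_cases hz : nu z = ∞
  · simp [top_le_iff.1 (hz ▸ hle z)]
  · exact add_le_of_le_tsub_right_of_le (le_add_right (hle z)) <|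
      hmu.le_of_forall_wayBelow fun x' hx' => ENNReal.le_sub_of_add_le_right hz (approx x' hx')

theorem map_add_map_le_of_le_add (h5 : O5 S) (hmu : IsFunctional mu) (hnu : IsFunctional nu)
    (hle : ∀ s, nu s ≤ mu s) {x y z w : S} (hzx : z ≤ x) (hzy : z ≤ y) (hy : y ≤ z + w) :
    mu y + nu x ≤ mu x + nu y + mu w :=
  calc mu y + nu x ≤ mu z + nu x + mu w := by
        rw [add_right_comm, ← hmu.map_add]; gcongr; exact hmu.monotone hy
    _ ≤ mu x + nu z + mu w := by gcongr ?_ + _; exact map_add_map_le_of_le h5 hmu hnu hle hzx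
    _ ≤ mu x + nu y + mu w := by gcongr; exact hnu.monotone hzy

theorem exists_le_add_lt_of_edwards (h5 : O5 S) (hl : IsFunctional l) (hed : EdwardsCondition l)
    {x y : S} (hyx : l y ≤ l x) (hy : l y ≠ ∞) {ε : ℝ≥0∞} (hε : ε ≠ 0) :
    ∃ z w, z ≤ x ∧ z ≤ y ∧ y ≤ z + w ∧ l w < ε := by
  by_contra! hcon
  have hεy : ε ≤ l y :=
    hcon 0 y (CuSemigroup.zero_le x) (CuSemigroup.zero_le y) (zero_add y).ge
  have lower_bound_le : ∀ z, z ≤ x → z ≤ y → l z ≤ l y - ε := by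
    intro z hzx hzy
    refine hl.le_of_forall_wayBelow fun z' hz' => ?_
    obtain ⟨w, hw_le, hle_w⟩ := h5 z' z y hz' hzy
    refine ENNReal.le_sub_of_add_le_right (ne_top_of_le_ne_top hy hεy) ?_
    calc l z' + ε ≤ l z' + l w := by gcongr; exact hcon z w hzx hzy hle_w
      _ = l (z' + w) := (hl.map_add z' w).symm
      _ ≤ l y := hl.monotone hw_le
  have hy_le : l y ≤ l y - ε := by
    conv_lhs => rw [← min_eq_right hyx, hed x y]
    exact iSup₂_le fun z hz => lower_bound_le z hz.1 hz.2
  exact hy_le.not_gt (ENNReal.sub_lt_self hy ((pos_iff_ne_zero.2 hε).trans_le hεy).ne' hε)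

theorem exists_lt_nat_mul_map_le (h5 : O5 S) (hlam : IsFunctional lam) (hmu : IsFunctional mu)
    (hed : EdwardsCondition lam) {r s : ℝ≥0∞} (hr : r ≠ ∞) (hle : ∀ a, r * lam a ≤ mu a)
    {x y : S} (hx₀ : lam x ≠ 0) (hx : lam x ≠ ∞) (hy : lam y ≠ ∞)
    (hmux : mu x ≤ (r + s) * lam x) {ε : ℝ≥0∞} (hε : ε ≠ 0) (m : ℕ) :
    ∃ w, lam w < ε ∧ m * mu y ≤ m * ((r + s) * lam y) + s * lam x + mu w := by
  have hmy : m * lam y ≠ ∞ := ENNReal.mul_ne_top (ENNReal.natCast_ne_top m) hy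
  obtain ⟨k, hmk, hkm⟩ := exists_nat_le_mul_le_add hmy hx₀ hx
  rw [← hlam.map_nsmul] at hmy
  obtain ⟨z, w, hzx, hzy, hyzw, hw⟩ := exists_le_add_lt_of_edwards h5 hlam hed
    (x := k • x) (y := m • y) (by simpa only [hlam.map_nsmul]) hmy hε
  have hmu_le := map_add_map_le_of_le_add h5 hmu (hlam.const_mul r) hle hzx hzy hyzw
  simp only [hlam.map_nsmul, hmu.map_nsmul] at hmu_le
  have hrk : r * (k * lam x) ≠ ∞ :=
    ENNReal.mul_ne_top hr (ENNReal.mul_ne_top (ENNReal.natCast_ne_top k) hx)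
  refine ⟨w, hw, (ENNReal.add_le_add_iff_right hrk).1 ?_⟩
  calc m * mu y + r * (k * lam x)
      ≤ k * mu x + r * (m * lam y) + mu w := hmu_le
    _ ≤ k * ((r + s) * lam x) + r * (m * lam y) + mu w := by gcongr
    _ = s * (k * lam x) + r * (m * lam y) + mu w + r * (k * lam x) := by ring
    _ ≤ s * (m * lam y + lam x) + r * (m * lam y) + mu w + r * (k * lam x) := by gcongr
    _ = m * ((r + s) * lam y) + s * lam x + mu w + r * (k * lam x) := by ring

theorem exists_lt_lt_of_le_mul_of_mul_lt (h5 : O5 S) (hlam : IsFunctional lam)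
    (hmu : IsFunctional mu) (hed : EdwardsCondition lam) {r s : ℝ≥0∞} (hr : r ≠ ∞) (hs : s ≠ ∞)
    (hle : ∀ a, r * lam a ≤ mu a) {x y : S} (hx₀ : lam x ≠ 0) (hx : lam x ≠ ∞) (hy : lam y ≠ ∞)
    (hmux : mu x ≤ (r + s) * lam x) (hmuy : (r + s) * lam y < mu y)
    {ε M : ℝ≥0∞} (hε : ε ≠ 0) (hM : M ≠ ∞) : ∃ w, lam w < ε ∧ M < mu w := by
  obtain ⟨m, hm⟩ := exists_nat_mul_add_lt_mul hmuy
    (ENNReal.add_ne_top.2 ⟨ENNReal.mul_ne_top hs hx, hM⟩)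
  obtain ⟨w, hw, hmw⟩ := exists_lt_nat_mul_map_le h5 hlam hmu hed hr hle hx₀ hx hy hmux hε m
  rw [← add_assoc] at hm
  exact ⟨w, hw, lt_of_add_lt_add_left (hm.trans_le hmw)⟩

end IsFunctional

section DenselyFinite

variable {S : Type*} [AddCommMonoid S] [PartialOrder S] [CuSemigroup S] {lam mu : S → ℝ≥0∞}

theorem DenselyFinite.ne_top_of_forall_mul_le (hmudf : DenselyFinite mu) (hlam : IsFunctional lam)
    (hlam₀ : ∃ s, lam s ≠ 0) {r : ℝ≥0∞} (hle : ∀ s, r * lam s ≤ mu s) : r ≠ ∞ := by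
  rintro rfl
  obtain ⟨a, ha⟩ := hlam₀
  obtain ⟨x, hxa, hx⟩ := hlam.exists_wayBelow_lt (pos_iff_ne_zero.2 ha)
  have hmux := hle x
  rw [ENNReal.top_mul hx.ne', top_le_iff] at hmux
  exact hmudf x ⟨a, hxa⟩ hmux

theorem DenselyFinite.exists_lt_lt_of_isGreatest (h5 : O5 S) (hlam : IsFunctional lam)
    (hmu : IsFunctional mu) (hlamdf : DenselyFinite lam) (hed : EdwardsCondition lam)
    {r : ℝ≥0∞} (hr : r ≠ ∞) (hgreatest : IsGreatest {t | ∀ s, t * lam s ≤ mu s} r)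
    (hlt : ∃ s, r * lam s < mu s) {ε M : ℝ≥0∞} (hε : ε ≠ 0) (hM : M ≠ ∞) :
    ∃ w, lam w < ε ∧ M < mu w := by
  obtain ⟨b, hb⟩ := hlt
  obtain ⟨y, hyb, hy⟩ := hmu.exists_wayBelow_lt hb
  have hry : r * lam y < mu y := (mul_le_mul' le_rfl (hlam.monotone hyb.le)).trans_lt hy
  have hlamy : lam y ≠ ∞ := hlamdf y ⟨b, hyb⟩
  obtain ⟨s, hs, hrs⟩ := ENNReal.lt_iff_exists_add_pos_lt.1 <|
    (ENNReal.lt_div_iff_mul_lt (.inr hr) (.inl hlamy)).2 hry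
  obtain ⟨a, ha⟩ : ∃ a, mu a < (r + s) * lam a := by
    by_contra! hcon
    exact (hgreatest.2 hcon).not_gt (ENNReal.lt_add_right hr (ENNReal.coe_ne_zero.2 hs.ne'))
  obtain ⟨x, hxa, hx⟩ := (hlam.const_mul (r + s)).exists_wayBelow_lt ha
  have hmux : mu x < (r + s) * lam x := (hmu.monotone hxa.le).trans_lt hx
  have hlamx₀ : lam x ≠ 0 := right_ne_zero_of_mul hmux.ne_bot
  exact hlam.exists_lt_lt_of_le_mul_of_mul_lt h5 hmu hed hr ENNReal.coe_ne_top hgreatest.1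
    hlamx₀ (hlamdf x ⟨a, hxa⟩) hlamy hmux.le (ENNReal.mul_lt_of_lt_div hrs) hε hM

end DenselyFinite

theorem exists_lam_lt_mu_gt_general {S : Type*} [AddCommMonoid S] [PartialOrder S]
    [CuSemigroup S] (h5 : O5 S) {lam mu : S → ℝ≥0∞} (hlam : IsFunctional lam)
    (hmu : IsFunctional mu) (hlamdf : DenselyFinite lam) (hmudf : DenselyFinite mu)
    (hmune : ∃ s, mu s ≠ 0) (hnotmult : ∀ c : ℝ≥0∞, 0 < c → c ≠ ∞ → ¬ ∀ s, mu s = c * lam s)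
    (hed : EdwardsCondition lam) {eps M : ℝ≥0∞} (heps : eps ≠ 0) (hM : M ≠ ∞) :
    ∃ w, lam w < eps ∧ M < mu w := by
  by_cases hlam₀ : ∃ s, lam s ≠ 0
  · have hgreatest := isGreatest_sSup_mul_le lam mu
    set r := sSup {t | ∀ s, t * lam s ≤ mu s}
    have hr : r ≠ ∞ := hmudf.ne_top_of_forall_mul_le hlam hlam₀ hgreatest.1
    have hlt : ∃ s, r * lam s < mu s := by
      by_contra! hcon
      have hmul : ∀ s, mu s = r * lam s := fun s => (hcon s).antisymm (hgreatest.1 s)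
      obtain ⟨s, hs⟩ := hmune
      have hr₀ : r ≠ 0 := left_ne_zero_of_mul (hmul s ▸ hs)
      exact hnotmult r (pos_iff_ne_zero.2 hr₀) hr hmul
    exact hlamdf.exists_lt_lt_of_isGreatest h5 hlam hmu hed hr hgreatest hlt heps hM
  · push Not at hlam₀
    obtain ⟨y, hy⟩ := hmune
    obtain ⟨n, hn⟩ := ENNReal.exists_nat_mul_gt hy hM
    exact ⟨n • y, by simpa [hlam₀] using pos_iff_ne_zero.2 heps, by rwa [hmu.map_nsmul]⟩

/-- In a Cu-semigroup with (O5) whose functionals are algebraically ordered, given a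
densely finite extreme functional `λ` satisfying Edwards' condition (together with all
its positive scalar multiples), and a densely finite nonzero functional `μ` that is not
a positive scalar multiple of `λ`, for every `ε ∈ (0,∞)` there exists `w` with
`λ(w) < ε` and `μ(w) > 1/ε`. -/
theorem exists_lam_lt_mu_gt {S : Type*} [AddCommMonoid S] [PartialOrder S]
    [CuSemigroup S] (h5 : O5 S)
    (halg : ∀ nu₁ nu₂ : S → ENNReal, IsFunctional nu₁ → IsFunctional nu₂ →
      (∀ s, nu₁ s ≤ nu₂ s) →
      ∃ nu : S → ENNReal, IsFunctional nu ∧ ∀ s, nu₁ s + nu s = nu₂ s)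
    (lam mu : S → ENNReal) (hlam : IsFunctional lam) (hmu : IsFunctional mu)
    (hlamdf : DenselyFinite lam) (hmudf : DenselyFinite mu)
    (hext : ExtremeFunctional lam)
    (hmune : ∃ s : S, mu s ≠ 0)
    (hnotmult : ∀ c : ENNReal, 0 < c → c ≠ ⊤ → ¬ (∀ s : S, mu s = c * lam s))
    (hedwards : ∀ c : ENNReal, 0 < c → c ≠ ⊤ → ∀ x y : S,
      min (c * lam x) (c * lam y) = ⨆ z ∈ {w : S | w ≤ x ∧ w ≤ y}, c * lam z)
    (eps : ENNReal) (heps : 0 < eps) (heps' : eps ≠ ⊤) :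
    ∃ w : S, lam w < eps ∧ 1 / eps < mu w := by
  exact exists_lam_lt_mu_gt_general h5 hlam hmu hlamdf hmudf hmune hnotmult
    (by simpa [EdwardsCondition] using hedwards 1 one_pos ENNReal.one_ne_top) heps.ne'
    (ENNReal.div_ne_top ENNReal.one_ne_top heps.ne')
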